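/- Let A be a C*-algebra, r > 0, and let (φ_m) be a normalized sequence in A' such that r·Σ|α_m| ≤ ‖Σ α_m φ_m‖ ≤ Σ|α_m| for all scalars. Then for every ε > 0 there exist a subsequence (φ_{m_n}), a sequence (a_n) of pairwise orthogonal positive normalized elements of A, and a sequence (b_n) of pairwise orthogonal positive normalized elements of A, such that |φ_{m_n}|(a_n) > (1−ε)r² and |φ*_{m_n}|(b_n) > (1−ε)r² for all n. -/

import Mathlib

/-!
Since `|φ(x)|² ≤ |φ⋆|(x⋆x)`, it suffices to find `x` in the unit ball with `|φ_m(x)|` close to `r`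
and to cut `x⋆x` down to positive elements which are exactly orthogonal. Let `ω` be a limit of the
functionals `|φ_m⋆|` along an ultrafilter. If no `x` had both `ω(x⋆x)` small and `|φ_m(x)|` close to
`r`, then by Hahn–Banach `φ_m` would be the sum of a functional of norm less than `r` and of a
functional factoring through the GNS space of `ω`; for many such `m`, suitable signs make the
Hilbert space parts add up to a norm of order `√n` only, against the lower `ℓ¹`-estimate.

Functional calculus turns `a = x⋆x` into a cutoff `(a - τ)₊` and a local unit `p` of that cutoff.
Since `ω(a)` is small, so is `|φ_m⋆|(p²)` for most `m`, and the contraction `x ↦ x(1 - p)` hardly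
changes `φ_m`; selecting further elements from its range makes them orthogonal to the cutoff. The
estimate for `|φ_m|` is the one for `|φ_m⋆|` applied to the adjoint functionals.
-/

open scoped ComplexOrder

universe u

/-- A witness that `absψ` is the absolute value `|ψ|` of the functional `ψ` on a
C*-algebra `A`: in some ambient unital C*-algebra `B` (playing the role of the
enveloping von Neumann algebra `A''`) into which `A` embeds isometrically and to
which `ψ` extends with the same norm, there is a partial isometry `u` realizing
the polar decomposition `ψ = u |ψ|`, `|ψ| = u* ψ`. -/
structure PolarWitness (A : Type u) [NonUnitalCStarAlgebra A]
    (ψ absψ : A →L[ℂ] ℂ) : Type (u + 1) where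
  B : Type
  [instRing : NormedRing B]
  [instStarRing : StarRing B]
  [instCStar : CStarRing B]
  [instAlg : NormedAlgebra ℂ B]
  [instStarMod : StarModule ℂ B]
  [instComplete : CompleteSpace B]
  ι : A → B
  ι_add : ∀ x y, ι (x + y) = ι x + ι y
  ι_smul : ∀ (c : ℂ) (x : A), ι (c • x) = c • ι x
  ι_mul : ∀ x y, ι (x * y) = ι x * ι y
  ι_star : ∀ x, ι (star x) = star (ι x)
  ι_isometry : ∀ x, ‖ι x‖ = ‖x‖
  Φ : B →L[ℂ] ℂ
  absΦ : B →L[ℂ] ℂ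
  u : B
  hΦ : ∀ x, Φ (ι x) = ψ x
  hΦnorm : ‖Φ‖ = ‖ψ‖
  hu : u * star u * u = u
  hu1 : ‖u‖ ≤ 1
  habsΦpos : ∀ b, 0 ≤ absΦ (star b * b)
  habsΦnorm : ‖absΦ‖ = ‖ψ‖
  hpolar : ∀ b, Φ b = absΦ (b * u)
  habs : ∀ b, absΦ b = Φ (b * star u)
  habsψ : ∀ x, absΦ (ι x) = absψ x

/-- `absψ` is the absolute value `|ψ|` from the polar decomposition of `ψ`. -/
def IsAbsValue {A : Type*} [NonUnitalCStarAlgebra A] (ψ absψ : A →L[ℂ] ℂ) : Prop :=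
  Nonempty (PolarWitness A ψ absψ)

section SignCombinations

/-- The lower `ℓ¹`-estimate `r · Σ |αᵢ| ≤ ‖Σ αᵢ xᵢ‖` tested only on finitely supported families of
signs `αᵢ = ±1`, which is all the construction needs. Signs are encoded as elements of `ℤˣ`. -/
def HasSignLowerBound {ι E : Type*} [SeminormedAddCommGroup E] (r : ℝ) (x : ι → E) : Prop :=
  ∀ (s : Finset ι) (σ : ι → ℤˣ), r * s.card ≤ ‖∑ i ∈ s, σ i • x i‖

theorem HasSignLowerBound.of_tsum {ι 𝕜 E : Type*} [RCLike 𝕜] [SeminormedAddCommGroup E]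
    [NormedSpace 𝕜 E] {r : ℝ} {x : ι → E}
    (h : ∀ α : ι → 𝕜, Summable (fun i => ‖α i‖) → r * ∑' i, ‖α i‖ ≤ ‖∑' i, α i • x i‖) :
    HasSignLowerBound r x := by
  classical
  intro s σ
  set α : ι → 𝕜 := fun i => if i ∈ s then ((σ i : ℤ) : 𝕜) else 0
  have hα_out : ∀ i ∉ s, α i = 0 := fun i hi => if_neg hi
  have hα_in : ∀ i ∈ s, α i = ((σ i : ℤ) : 𝕜) := fun i hi => if_pos hi
  have hnorm : ∑' i, ‖α i‖ = s.card := by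
    rw [tsum_eq_sum (s := s) fun i hi => by rw [hα_out i hi, norm_zero], Finset.card_eq_sum_ones,
      Nat.cast_sum, Nat.cast_one]
    refine Finset.sum_congr rfl fun i hi => ?_
    rcases Int.units_eq_one_or (σ i) with h1 | h1 <;> simp [hα_in i hi, h1]
  have hsum : ∑' i, α i • x i = ∑ i ∈ s, σ i • x i := by
    rw [tsum_eq_sum (s := s) fun i hi => by rw [hα_out i hi, zero_smul]]
    refine Finset.sum_congr rfl fun i hi => ?_
    rw [hα_in i hi, Int.cast_smul_eq_zsmul, Units.smul_def]
  rw [← hnorm, ← hsum]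
  exact h α (summable_of_ne_finset_zero (s := s) fun i hi => by rw [hα_out i hi, norm_zero])

theorem HasSignLowerBound.comp_injective {ι κ E : Type*} [SeminormedAddCommGroup E] {r : ℝ}
    {x : ι → E} (hx : HasSignLowerBound r x) {f : κ → ι} (hf : f.Injective) :
    HasSignLowerBound r (x ∘ f) := by
  intro s σ
  have h := hx (s.map ⟨f, hf⟩) (Function.extend f σ 1)
  simpa [Finset.sum_map, hf.extend_apply] using h

theorem exists_sign_norm_sum_sq_le {ι : Type*} (𝕜 : Type*) {H : Type*} [RCLike 𝕜]
    [SeminormedAddCommGroup H] [InnerProductSpace 𝕜 H] (v : ι → H) (s : Finset ι) :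
    ∃ σ : ι → ℤˣ, ‖∑ i ∈ s, σ i • v i‖ ^ 2 ≤ ∑ i ∈ s, ‖v i‖ ^ 2 := by
  classical
  induction s using Finset.induction_on with
  | empty => exact ⟨1, by simp⟩
  | insert j s hj ih =>
    obtain ⟨σ, hσ⟩ := ih
    set w := ∑ i ∈ s, σ i • v i
    have hupdate (ε : ℤˣ) :
        ∑ i ∈ insert j s, Function.update σ j ε i • v i = w + ε • v j := by
      rw [Finset.sum_insert hj, Function.update_self, add_comm]
      congr 1
      exact Finset.sum_congr rfl fun i hi => by
        rw [Function.update_of_ne (ne_of_mem_of_not_mem hi hj)]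
    have hpar := parallelogram_law_with_norm 𝕜 w (v j)
    rw [Finset.sum_insert hj]
    rcases le_total ‖w + v j‖ ‖w - v j‖ with hle | hle
    · refine ⟨Function.update σ j 1, ?_⟩
      rw [hupdate, one_smul]
      nlinarith [norm_nonneg (w + v j)]
    · refine ⟨Function.update σ j (-1), ?_⟩
      rw [hupdate, Units.neg_smul, one_smul, ← sub_eq_add_neg]
      nlinarith [norm_nonneg (w - v j)]

variable {ι 𝕜 E F H : Type*} [RCLike 𝕜] [SeminormedAddCommGroup E] [NormedSpace 𝕜 E]
  [SeminormedAddCommGroup F] [NormedSpace 𝕜 F]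

-- Hahn–Banach on the graph of `T`, with respect to the seminorm `a ‖x‖ + b ‖y‖` on `E × F`.
theorem exists_eq_add_comp_of_norm_le (f : E →L[𝕜] 𝕜) (T : E →L[𝕜] F) {a b : ℝ} (ha : 0 ≤ a)
    (hb : 0 ≤ b) (h : ∀ x, ‖f x‖ ≤ a * ‖x‖ + b * ‖T x‖) :
    ∃ (g : E →L[𝕜] 𝕜) (k : F →L[𝕜] 𝕜), ‖g‖ ≤ a ∧ ‖k‖ ≤ b ∧ f = g + k ∘L T := by
  lift a to NNReal using ha
  lift b to NNReal using hb
  let p : Seminorm 𝕜 (E × F) :=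
    a • (normSeminorm 𝕜 E).comp (LinearMap.fst 𝕜 E F) +
      b • (normSeminorm 𝕜 F).comp (LinearMap.snd 𝕜 E F)
  have hp (z : E × F) : p z = a * ‖z.1‖ + b * ‖z.2‖ := rfl
  obtain ⟨G, hG_ext, hG_le⟩ := Module.Dual.exists_extension_of_le_seminorm
    (LinearMap.graph (T : E →ₗ[𝕜] F)) ((f : E →ₗ[𝕜] 𝕜) ∘ₗ LinearMap.fst 𝕜 E F ∘ₗ
      Submodule.subtype _) (p := p) fun ⟨z, hz⟩ => by
        have hz' : z.2 = T z.1 := by simpa using hz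
        simpa [hp, hz'] using h z.1
  have hG_graph (x : E) : G (x, T x) = f x := hG_ext ⟨(x, T x), by simp⟩
  refine ⟨(G ∘ₗ LinearMap.inl 𝕜 E F).mkContinuous a fun x => ?_,
    (G ∘ₗ LinearMap.inr 𝕜 E F).mkContinuous b fun y => ?_,
    LinearMap.mkContinuous_norm_le _ a.2 _, LinearMap.mkContinuous_norm_le _ b.2 _, ?_⟩
  · simpa [hp] using hG_le (x, 0)
  · simpa [hp] using hG_le (0, y)
  · ext x
    simp [← hG_graph x, ← map_add]

variable [NormedAddCommGroup H] [InnerProductSpace 𝕜 H] [CompleteSpace H] {r : ℝ}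
  {φ : ι → E →L[𝕜] 𝕜}

theorem exists_sign_norm_sum_dual_sq_le {k : ι → H →L[𝕜] 𝕜} {s : Finset ι} {b : ℝ}
    (hk : ∀ i ∈ s, ‖k i‖ ≤ b) :
    ∃ σ : ι → ℤˣ, ‖∑ i ∈ s, σ i • k i‖ ^ 2 ≤ s.card * b ^ 2 := by
  obtain ⟨σ, hσ⟩ := exists_sign_norm_sum_sq_le 𝕜
    (fun i => (InnerProductSpace.toDual 𝕜 H).symm (k i)) s
  refine ⟨σ, ?_⟩
  calc ‖∑ i ∈ s, σ i • k i‖ ^ 2 ≤ ∑ i ∈ s, ‖k i‖ ^ 2 := by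
        rw [← (InnerProductSpace.toDual 𝕜 H).symm.norm_map, map_sum]
        simpa [Units.smul_def] using hσ
    _ ≤ ∑ _i ∈ s, b ^ 2 := Finset.sum_le_sum fun i hi => by
        gcongr
        exact hk i hi
    _ = s.card * b ^ 2 := by rw [Finset.sum_const, nsmul_eq_mul]

theorem HasSignLowerBound.card_mul_sq_le (hφ : HasSignLowerBound r φ) (T : E →L[𝕜] H)
    {a b : ℝ} (ha : 0 ≤ a) (har : a ≤ r) (hb : 0 ≤ b) (s : Finset ι)
    (hs : ∀ i ∈ s, ∀ x, ‖φ i x‖ ≤ a * ‖x‖ + b * ‖T x‖) :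
    s.card * (r - a) ^ 2 ≤ (b * ‖T‖) ^ 2 := by
  have hsplit (i : ι) : ∃ (g : E →L[𝕜] 𝕜) (k : H →L[𝕜] 𝕜),
      i ∈ s → ‖g‖ ≤ a ∧ ‖k‖ ≤ b ∧ φ i = g + k ∘L T := by
    by_cases hi : i ∈ s
    · obtain ⟨g, k, hgk⟩ := exists_eq_add_comp_of_norm_le (φ i) T ha hb (hs i hi)
      exact ⟨g, k, fun _ => hgk⟩
    · exact ⟨0, 0, fun h => absurd h hi⟩
  choose g k hgk using hsplit
  obtain ⟨σ, hk⟩ := exists_sign_norm_sum_dual_sq_le fun i hi => (hgk i hi).2.1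
  have hg : ‖∑ i ∈ s, σ i • g i‖ ≤ s.card * a :=
    calc ‖∑ i ∈ s, σ i • g i‖ ≤ ∑ _i ∈ s, a := norm_sum_le_of_le s fun i hi => by
          rw [norm_units_zsmul]
          exact (hgk i hi).1
      _ = s.card * a := by rw [Finset.sum_const, nsmul_eq_mul]
  have hsum : ∑ i ∈ s, σ i • φ i = ∑ i ∈ s, σ i • g i + (∑ i ∈ s, σ i • k i) ∘L T := by
    rw [Finset.sum_congr rfl fun i hi => congrArg (σ i • ·) (hgk i hi).2.2]
    ext x
    simp [Units.smul_def, Finset.sum_add_distrib]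
  have hlow : s.card * (r - a) ≤ ‖∑ i ∈ s, σ i • k i‖ * ‖T‖ := by
    have := (hφ s σ).trans (hsum ▸ norm_add_le _ _)
    have := ContinuousLinearMap.opNorm_comp_le (∑ i ∈ s, σ i • k i) T
    linarith
  rcases s.eq_empty_or_nonempty with rfl | hne
  · simpa using sq_nonneg (b * ‖T‖)
  have hcard : (0 : ℝ) < s.card := by exact_mod_cast hne.card_pos
  refine le_of_mul_le_mul_left ?_ hcard
  calc s.card * (s.card * (r - a) ^ 2) = (s.card * (r - a)) ^ 2 := by ring
    _ ≤ (‖∑ i ∈ s, σ i • k i‖ * ‖T‖) ^ 2 := by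
        have := sub_nonneg.2 har
        gcongr
    _ = ‖∑ i ∈ s, σ i • k i‖ ^ 2 * ‖T‖ ^ 2 := mul_pow _ _ _
    _ ≤ s.card * b ^ 2 * ‖T‖ ^ 2 := by gcongr
    _ = s.card * (b * ‖T‖) ^ 2 := by ring

theorem HasSignLowerBound.finite_setOf_norm_le (hφ : HasSignLowerBound r φ) (T : E →L[𝕜] H)
    {a b : ℝ} (ha : 0 ≤ a) (har : a < r) (hb : 0 ≤ b) :
    {i | ∀ x, ‖φ i x‖ ≤ a * ‖x‖ + b * ‖T x‖}.Finite := by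
  by_contra hinf
  obtain ⟨n, hn⟩ := exists_nat_gt ((b * ‖T‖) ^ 2 / (r - a) ^ 2)
  obtain ⟨s, hs, rfl⟩ := Set.Infinite.exists_subset_card_eq hinf n
  have hpos : 0 < (r - a) ^ 2 := by have := sub_pos.2 har; positivity
  exact ((div_lt_iff₀ hpos).1 hn).not_ge (hφ.card_mul_sq_le T ha har.le hb s fun _ hi => hs hi)

theorem norm_apply_le_of_forall_unit_ball (f : E →L[𝕜] 𝕜) (T : E →L[𝕜] F) {C ρ δ : ℝ}
    (hf : ‖f‖ ≤ C) (hρ : 0 ≤ ρ) (hδ : 0 < δ)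
    (h : ∀ x, ‖x‖ ≤ 1 → ‖T x‖ < δ → ‖f x‖ ≤ ρ) (x : E) :
    ‖f x‖ ≤ ρ * ‖x‖ + C / δ * ‖T x‖ := by
  have hC : 0 ≤ C := (norm_nonneg f).trans hf
  rcases le_or_gt (δ * ‖x‖) (‖T x‖) with hT | hT
  · calc ‖f x‖ ≤ C * ‖x‖ := f.le_of_opNorm_le hf x
      _ = C / δ * (δ * ‖x‖) := by field_simp
      _ ≤ C / δ * ‖T x‖ := by gcongr
      _ ≤ ρ * ‖x‖ + C / δ * ‖T x‖ := le_add_of_nonneg_left (by positivity)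
  · have hx : 0 < ‖x‖ := pos_of_mul_pos_right ((norm_nonneg _).trans_lt hT) hδ.le
    have hunit := h (((‖x‖⁻¹ : ℝ) : 𝕜) • x)
    simp only [map_smul, norm_smul, RCLike.norm_ofReal, abs_of_pos (inv_pos.2 hx), inv_mul_eq_div,
      div_self hx.ne', div_lt_iff₀ hx, div_le_iff₀ hx] at hunit
    exact (hunit le_rfl hT).trans (le_add_of_nonneg_right (by positivity))

open Filter in
theorem HasSignLowerBound.eventually_exists_norm_lt (hφ : HasSignLowerBound r φ) {C : ℝ}
    (hφC : ∀ i, ‖φ i‖ ≤ C) (T : E →L[𝕜] H) {ρ δ : ℝ} (hρ : 0 ≤ ρ) (hρr : ρ < r) (hδ : 0 < δ) :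
    ∀ᶠ i in cofinite, ∃ x, ‖x‖ ≤ 1 ∧ ‖T x‖ < δ ∧ ρ < ‖φ i x‖ := by
  rcases isEmpty_or_nonempty ι with _ | ⟨⟨i₀⟩⟩
  · exact Eventually.of_forall isEmptyElim
  have hC : 0 ≤ C := (norm_nonneg _).trans (hφC i₀)
  refine (hφ.finite_setOf_norm_le T hρ hρr (div_nonneg hC hδ.le)).subset fun i hi => ?_
  simp only [Set.mem_compl_iff, Set.mem_ofPred_eq, not_exists, not_and, not_lt] at hi
  exact norm_apply_le_of_forall_unit_ball (φ i) T (hφC i) hρ hδ hi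

end SignCombinations

section Cutoffs

variable {A : Type*} [NonUnitalCStarAlgebra A]

/-- Right multiplication by the formal element `1 - p`, as an operator on a possibly non-unital
algebra. -/
noncomputable def mulRightOneSub (p : A) : A →L[ℂ] A :=
  ContinuousLinearMap.id ℂ A - (ContinuousLinearMap.mul ℂ A).flip p

theorem mulRightOneSub_apply (p x : A) : mulRightOneSub p x = x - x * p := rfl

/-- The positive part of `a - τ`, for `τ > 0` and `a` self-adjoint. -/
noncomputable def softThreshold (τ : ℝ) (a : A) : A := cfcₙ (fun t : ℝ => max (t - τ) 0) a

/-- The functional calculus of `t ↦ min (t / τ) 1` at `a`: a local unit for `softThreshold τ a`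
that is still dominated by a multiple of `a`. -/
noncomputable def ramp (τ : ℝ) (a : A) : A := cfcₙ (fun t : ℝ => min (τ⁻¹ * t) 1) a

theorem ramp_mul_softThreshold {τ : ℝ} (hτ : 0 < τ) (a : A) :
    ramp τ a * softThreshold τ a = softThreshold τ a := by
  rw [softThreshold, ramp,
    ← cfcₙ_mul _ _ a (by fun_prop) (by simp) (by fun_prop) (by simpa using hτ.le)]
  refine cfcₙ_congr fun t _ => ?_
  rcases le_total t τ with ht | ht
  · simp [ht]
  · have : 1 ≤ τ⁻¹ * t := by rwa [← div_eq_inv_mul, one_le_div₀ hτ]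
    simp [this]

variable [PartialOrder A] [StarOrderedRing A]

theorem mul_eq_zero_of_nonneg_of_le_smul {a c d : A} {K : ℝ} (hc : 0 ≤ c) (hca : c ≤ K • a)
    (had : a * d = 0) : c * d = 0 := by
  obtain ⟨s, rfl⟩ := CStarAlgebra.nonneg_iff_eq_star_mul_self.1 hc
  have hle : star (s * d) * (s * d) ≤ 0 := by
    simpa [mul_assoc, smul_mul_assoc, had] using star_left_conjugate_le_conjugate hca d
  have hsd : s * d = 0 :=
    CStarRing.star_mul_self_eq_zero_iff _ |>.1 (hle.antisymm (star_mul_self_nonneg _))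
  rw [mul_assoc, hsd, mul_zero]

open CStarAlgebra in
theorem norm_sub_mul_right_le {p : A} (hp : 0 ≤ p) (hp1 : ‖p‖ ≤ 1) (x : A) :
    ‖x - x * p‖ ≤ ‖x‖ := by
  have h := norm_sub_mul_self_le_of_inr (star x) le_rfl hp hp1 (norm_nonneg x) (by
    rw [Unitization.inr_zero, sub_zero, mul_one, CStarRing.norm_star_mul_self,
      Unitization.norm_inr, norm_star, sq])
  rw [← norm_star]
  simpa [hp.star_eq] using h

theorem norm_mulRightOneSub_le {p : A} (hp : 0 ≤ p) (hp1 : ‖p‖ ≤ 1) : ‖mulRightOneSub p‖ ≤ 1 :=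
  ContinuousLinearMap.opNorm_le_bound _ zero_le_one fun x => by
    simpa [mulRightOneSub_apply] using norm_sub_mul_right_le hp hp1 x

variable {a : A} {τ : ℝ}

theorem softThreshold_nonneg (τ : ℝ) (a : A) : 0 ≤ softThreshold τ a :=
  cfcₙ_nonneg fun _ _ => le_max_right _ _

theorem ramp_nonneg (hτ : 0 ≤ τ) (ha : 0 ≤ a) : 0 ≤ ramp τ a :=
  cfcₙ_nonneg fun t ht => by
    have := quasispectrum_nonneg_of_nonneg a ha t ht
    positivity

theorem softThreshold_le (hτ : 0 ≤ τ) (ha : 0 ≤ a) : softThreshold τ a ≤ a := by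
  conv_rhs => rw [← cfcₙ_id' ℝ a]
  exact cfcₙ_mono (fun t ht => max_le (by linarith) (quasispectrum_nonneg_of_nonneg a ha t ht))
    (by fun_prop) (by fun_prop) (by simpa using hτ) rfl

theorem norm_sub_softThreshold_le (hτ : 0 ≤ τ) (ha : 0 ≤ a) : ‖a - softThreshold τ a‖ ≤ τ := by
  have hsub : a - softThreshold τ a = cfcₙ (fun t : ℝ => t - max (t - τ) 0) a := by
    rw [cfcₙ_sub (fun t => t) _ a (by fun_prop) rfl (by fun_prop) (by simpa using hτ),
      cfcₙ_id' ℝ a, softThreshold]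
  rw [hsub]
  refine norm_cfcₙ_le fun t ht => ?_
  have ht0 := quasispectrum_nonneg_of_nonneg a ha t ht
  rw [Real.norm_eq_abs, abs_le]
  constructor <;> cases max_cases (t - τ) 0 <;> linarith

theorem norm_ramp_le_one (hτ : 0 ≤ τ) (ha : 0 ≤ a) : ‖ramp τ a‖ ≤ 1 :=
  norm_cfcₙ_le fun t ht => by
    have ht0 := quasispectrum_nonneg_of_nonneg a ha t ht
    rw [Real.norm_of_nonneg (by positivity)]
    exact min_le_right _ _

theorem ramp_le (τ : ℝ) (ha : 0 ≤ a) : ramp τ a ≤ τ⁻¹ • a := by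
  rw [← cfcₙ_const_mul_id _ a]
  exact cfcₙ_mono (fun t _ => min_le_left _ _) (by fun_prop) (by fun_prop) (by simp) (by simp)

theorem ramp_mul_self_le (hτ : 0 ≤ τ) (ha : 0 ≤ a) : ramp τ a * ramp τ a ≤ τ⁻¹ • a := by
  rw [ramp, ← cfcₙ_mul _ _ a (by fun_prop) (by simp) (by fun_prop) (by simp),
    ← cfcₙ_const_mul_id _ a]
  refine cfcₙ_mono (fun t ht => ?_) (by fun_prop) (by fun_prop) (by simp) (by simp)
  have ht0 := quasispectrum_nonneg_of_nonneg a ha t ht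
  exact (mul_le_of_le_one_right (by positivity) (min_le_right _ _)).trans (min_le_left _ _)

theorem softThreshold_mul_eq_zero (hτ : 0 ≤ τ) (ha : 0 ≤ a) {d : A} (had : a * d = 0) :
    softThreshold τ a * d = 0 :=
  mul_eq_zero_of_nonneg_of_le_smul (K := 1) (softThreshold_nonneg τ a)
    (by simpa using softThreshold_le hτ ha) had

theorem ramp_mul_eq_zero (hτ : 0 ≤ τ) (ha : 0 ≤ a) {d : A} (had : a * d = 0) :
    ramp τ a * d = 0 :=
  mul_eq_zero_of_nonneg_of_le_smul (ramp_nonneg hτ ha) (ramp_le τ ha) had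

end Cutoffs

section PositiveFunctionals

open Filter Topology

theorem exists_tendsto_apply_of_norm_le {ι 𝕜 E : Type*} [NontriviallyNormedField 𝕜]
    [ProperSpace 𝕜] [SeminormedAddCommGroup E] [NormedSpace 𝕜 E] {ψ : ι → E →L[𝕜] 𝕜} {C : ℝ}
    (hψ : ∀ i, ‖ψ i‖ ≤ C) (U : Ultrafilter ι) :
    ∃ ω : E →L[𝕜] 𝕜, ∀ x, Tendsto (fun i => ψ i x) U (𝓝 (ω x)) := by
  have hball : ∀ i, StrongDual.toWeakDual (ψ i) ∈
      WeakDual.toStrongDual ⁻¹' Metric.closedBall (0 : StrongDual 𝕜 E) C := fun i => by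
    simpa using hψ i
  obtain ⟨ω, -, hω⟩ := (WeakDual.isCompact_closedBall (𝕜 := 𝕜) (E := E) 0 C).ultrafilter_le_nhds
    (U.map fun i => StrongDual.toWeakDual (ψ i))
    (le_principal_iff.2 <| Ultrafilter.mem_map.2 <| univ_mem' hball)
  have hlim : Tendsto (fun i => StrongDual.toWeakDual (ψ i)) U (𝓝 ω) := hω
  exact ⟨WeakDual.toStrongDual ω, fun x => ((WeakDual.eval_continuous x).tendsto ω).comp hlim⟩

variable {A : Type*} [NonUnitalCStarAlgebra A] [PartialOrder A]

/-- `ψ` is a positive contractive functional with `|φ x|² ≤ ψ (x⋆ x)`. For `‖φ‖ ≤ 1` this holds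
with `ψ = |φ⋆|` (not `|φ|`, which dominates `|φ x|²` through `x x⋆`). -/
structure IsSquareMajorant (ψ φ : A →L[ℂ] ℂ) : Prop where
  map_nonneg : ∀ a, 0 ≤ a → 0 ≤ ψ a
  norm_majorant_le_one : ‖ψ‖ ≤ 1
  norm_sq_le : ∀ x, ‖φ x‖ ^ 2 ≤ (ψ (star x * x)).re

namespace IsSquareMajorant

variable {φ ψ : A →L[ℂ] ℂ}

theorem re_apply_le_norm (h : IsSquareMajorant ψ φ) (a : A) : (ψ a).re ≤ ‖a‖ :=
  (Complex.re_le_norm _).trans <| by simpa using ψ.le_of_opNorm_le h.norm_majorant_le_one a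

theorem norm_le_one (h : IsSquareMajorant ψ φ) : ‖φ‖ ≤ 1 :=
  φ.opNorm_le_bound zero_le_one fun x => by
    rw [one_mul, ← sq_le_sq₀ (norm_nonneg _) (norm_nonneg x), sq ‖x‖,
      ← CStarRing.norm_star_mul_self]
    exact (h.norm_sq_le x).trans (h.re_apply_le_norm _)

end IsSquareMajorant

variable [StarOrderedRing A]

theorem exists_positiveLinearMap_tendsto {ι : Type*} {ψ : ι → A →L[ℂ] ℂ} {C : ℝ}
    (hψ : ∀ i, ‖ψ i‖ ≤ C) (hψ0 : ∀ i a, 0 ≤ a → 0 ≤ ψ i a) (U : Ultrafilter ι) :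
    ∃ ω : A →ₚ[ℂ] ℂ, ∀ x, Tendsto (fun i => ψ i x) U (𝓝 (ω x)) := by
  obtain ⟨ω, hω⟩ := exists_tendsto_apply_of_norm_le hψ U
  exact ⟨.mk₀ (ω : A →ₗ[ℂ] ℂ) fun a ha =>
    ge_of_tendsto' (hω a) fun i => hψ0 i a ha, hω⟩

theorem norm_toPreGNS_sq (f : A →ₚ[ℂ] ℂ) (x : A) :
    ‖f.toPreGNS x‖ ^ 2 = (f (star x * x)).re := by
  rw [← Complex.ofReal_re (‖f.toPreGNS x‖ ^ 2), Complex.ofReal_pow, f.preGNS_norm_sq,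
    f.ofPreGNS_toPreGNS]

theorem exists_norm_toPreGNS_le (f : A →ₚ[ℂ] ℂ) :
    ∃ C : ℝ, ∀ x, ‖f.toPreGNS x‖ ≤ C * ‖x‖ := by
  obtain ⟨C, hC⟩ := f.exists_norm_apply_le
  refine ⟨√C, fun x => ?_⟩
  rw [← sq_le_sq₀ (norm_nonneg _) (by positivity), norm_toPreGNS_sq, mul_pow,
    Real.sq_sqrt C.coe_nonneg, sq ‖x‖, ← CStarRing.norm_star_mul_self]
  exact (Complex.re_le_norm _).trans (hC _)

/-- The canonical map of `A` into the GNS space of `f`, which turns the seminorm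
`x ↦ √(f (x⋆ x))` into a Hilbert space norm. -/
noncomputable def gnsMap (f : A →ₚ[ℂ] ℂ) : A →L[ℂ] f.GNS :=
  UniformSpace.Completion.toComplL ∘L
    f.toPreGNS.toLinearMap.mkContinuousOfExistsBound (exists_norm_toPreGNS_le f)

theorem norm_gnsMap_sq (f : A →ₚ[ℂ] ℂ) (x : A) : ‖gnsMap f x‖ ^ 2 = (f (star x * x)).re := by
  rw [← norm_toPreGNS_sq, gnsMap]
  exact congrArg (· ^ 2) (UniformSpace.Completion.norm_coe (f.toPreGNS x))

namespace IsSquareMajorant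

variable {φ ψ : A →L[ℂ] ℂ}

theorem re_mono (h : IsSquareMajorant ψ φ) {a b : A} (hab : a ≤ b) : (ψ a).re ≤ (ψ b).re := by
  have := (Complex.nonneg_iff.1 (h.map_nonneg _ (sub_nonneg.2 hab))).1
  rwa [map_sub, Complex.sub_re, sub_nonneg] at this

theorem norm_apply_mul_sq_le (h : IsSquareMajorant ψ φ) (x p : A) :
    ‖φ (x * p)‖ ^ 2 ≤ ‖x‖ ^ 2 * (ψ (star p * p)).re := by
  have hconj : star (x * p) * (x * p) ≤ (‖x‖ ^ 2 : ℝ) • (star p * p) := by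
    rw [sq, ← CStarRing.norm_star_mul_self, star_mul, mul_assoc, ← mul_assoc (star x),
      ← mul_assoc]
    exact CStarAlgebra.star_left_conjugate_le_norm_smul
  refine ((h.norm_sq_le _).trans (h.re_mono hconj)).trans_eq ?_
  rw [← Complex.coe_smul, map_smul, smul_eq_mul, Complex.re_ofReal_mul]

end IsSquareMajorant

end PositiveFunctionals

section Selection

open Filter Topology

theorem exists_strictMono_forall_lt {S X : Type*} [Nonempty S] (D : S → Set X)
    {P : ℕ → X → Prop} {R : X → X → Prop}
    (step : ∀ s k, ∃ m > k, ∃ a, P m a ∧ ∃ s', a ∈ D s' ∧ ∀ d ∈ D s, R d a ∧ d ∈ D s') :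
    ∃ m : ℕ → ℕ, StrictMono m ∧ ∃ a : ℕ → X, (∀ n, P (m n) (a n)) ∧
      ∀ i j, i < j → R (a i) (a j) := by
  choose m hm a hP next hnext hD using step
  let state : ℕ → S × ℕ := Nat.rec (Classical.arbitrary S, 0)
    fun _ t => (next t.1 t.2, m t.1 t.2)
  have hmono : Monotone fun n => D (state n).1 :=
    monotone_nat_of_le_succ fun n d hd => (hD _ (state n).2 d hd).2
  refine ⟨fun n => m (state n).1 (state n).2,
    strictMono_nat_of_lt_succ fun n => hm _ (state (n + 1)).2,
    fun n => a (state n).1 (state n).2, fun n => hP _ _, fun i j hij => ?_⟩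
  exact (hD _ (state j).2 _ (hmono hij (hnext _ _))).1

/-- The contraction `E` changes the functionals `φ i` by at most `κ` in norm, for `l`-almost
every `i`. -/
structure AlmostFixes {ι 𝕜 V : Type*} [NontriviallyNormedField 𝕜] [SeminormedAddCommGroup V]
    [NormedSpace 𝕜 V] (E : V →L[𝕜] V) (l : Filter ι) (φ : ι → V →L[𝕜] 𝕜) (κ : ℝ) : Prop where
  norm_le_one : ‖E‖ ≤ 1
  eventually_norm_sub_le : ∀ᶠ i in l, ‖φ i - φ i ∘L E‖ ≤ κ

namespace AlmostFixes

variable {ι 𝕜 V : Type*} [NontriviallyNormedField 𝕜] [SeminormedAddCommGroup V]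
  [NormedSpace 𝕜 V] {E F : V →L[𝕜] V} {l : Filter ι} {φ : ι → V →L[𝕜] 𝕜} {κ κ' : ℝ}

theorem id (l : Filter ι) (φ : ι → V →L[𝕜] 𝕜) :
    AlmostFixes (ContinuousLinearMap.id 𝕜 V) l φ 0 :=
  ⟨ContinuousLinearMap.norm_id_le, by simp⟩

theorem nonneg [l.NeBot] (hE : AlmostFixes E l φ κ) : 0 ≤ κ :=
  have ⟨_, hi⟩ := hE.eventually_norm_sub_le.exists
  (norm_nonneg _).trans hi

theorem comp (hF : AlmostFixes F l φ κ') (hE : AlmostFixes E l φ κ) :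
    AlmostFixes (F ∘L E) l φ (κ + κ') := by
  refine ⟨(F.opNorm_comp_le E).trans (mul_le_one₀ hF.norm_le_one (norm_nonneg _) hE.norm_le_one),
    ?_⟩
  filter_upwards [hE.eventually_norm_sub_le, hF.eventually_norm_sub_le] with i hEi hFi
  have hsplit : φ i - φ i ∘L F ∘L E = (φ i - φ i ∘L E) + (φ i - φ i ∘L F) ∘L E := by
    ext x
    simp
  rw [hsplit]
  refine norm_add_le_of_le hEi ((ContinuousLinearMap.opNorm_comp_le _ _).trans ?_)
  exact (mul_le_of_le_one_right (norm_nonneg _) hE.norm_le_one).trans hFi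

end AlmostFixes

/-- The right annihilator of the range of `E`. It records the elements which are orthogonal to
everything that can still be selected from the range of `E`. -/
def rangeAnnihilator {A : Type*} [NonUnitalCStarAlgebra A] (E : A →L[ℂ] A) : Set A :=
  {d | ∀ x, E x * d = 0}

theorem mem_rangeAnnihilator_mulRightOneSub_comp {A : Type*} [NonUnitalCStarAlgebra A]
    {E : A →L[ℂ] A} {p d : A} :
    d ∈ rangeAnnihilator (mulRightOneSub p ∘L E) ↔ ∀ x, E x * d = E x * (p * d) := by
  simp [rangeAnnihilator, mulRightOneSub_apply, sub_mul, mul_assoc, sub_eq_zero]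

variable {ι A : Type*} [NonUnitalCStarAlgebra A] [PartialOrder A] [StarOrderedRing A]
  {φ ψ : ι → A →L[ℂ] ℂ} {E : A →L[ℂ] A} {r ρ κ c : ℝ}

theorem almostFixes_mulRightOneSub {l : Filter ι} (hψ : ∀ i, IsSquareMajorant (ψ i) (φ i)) {p : A}
    (hp : 0 ≤ p) (hp1 : ‖p‖ ≤ 1) (hκ : 0 ≤ κ) (hpψ : ∀ᶠ i in l, (ψ i (p * p)).re ≤ κ ^ 2) :
    AlmostFixes (mulRightOneSub p) l φ κ := by
  refine ⟨norm_mulRightOneSub_le hp hp1, hpψ.mono fun i hi => ?_⟩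
  refine ContinuousLinearMap.opNorm_le_bound _ hκ fun x => ?_
  have hx : (φ i - φ i ∘L mulRightOneSub p) x = φ i (x * p) := by
    simp [mulRightOneSub_apply]
  rw [hx, ← sq_le_sq₀ (norm_nonneg _) (by positivity), mul_pow, mul_comm]
  refine ((hψ i).norm_apply_mul_sq_le x p).trans ?_
  rw [hp.star_eq]
  gcongr

theorem AlmostFixes.eventually_exists_re_lt {U : Ultrafilter ι} (hE : AlmostFixes E U φ κ)
    (hU : (U : Filter ι) ≤ cofinite) (hφ : HasSignLowerBound r φ) (hφ1 : ∀ i, ‖φ i‖ ≤ 1)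
    (ω : A →ₚ[ℂ] ℂ) {δ : ℝ} (hρ : 0 ≤ ρ) (hρκ : ρ + κ < r) (hδ : 0 < δ) :
    ∀ᶠ i in U, ∃ x, ‖E x‖ ≤ 1 ∧ (ω (star (E x) * E x)).re < δ ∧ ρ < ‖φ i (E x)‖ := by
  have hlarge := hφ.eventually_exists_norm_lt hφ1 (gnsMap ω ∘L E) (add_nonneg hρ hE.nonneg) hρκ
    (Real.sqrt_pos.2 hδ)
  filter_upwards [hU hlarge, hE.eventually_norm_sub_le] with i ⟨x, hx, hxω, hxφ⟩ hi
  have hclose : ‖φ i x - φ i (E x)‖ ≤ κ :=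
    (ContinuousLinearMap.le_of_opNorm_le _ hi x).trans (mul_le_of_le_one_right hE.nonneg hx)
  refine ⟨x, ?_, ?_, ?_⟩
  · simpa using (E.le_of_opNorm_le hE.norm_le_one x).trans (by simpa using hx)
  · rw [← norm_gnsMap_sq]
    exact (Real.lt_sqrt (norm_nonneg _)).1 hxω
  · linarith [norm_sub_norm_le (φ i x) (φ i (E x))]

theorem IsSquareMajorant.norm_sq_sub_le {φ ψ : A →L[ℂ] ℂ} (h : IsSquareMajorant ψ φ) {τ : ℝ}
    (hτ : 0 ≤ τ) (y : A) :
    ‖φ y‖ ^ 2 - τ ≤ (ψ (softThreshold τ (star y * y))).re := by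
  have hsub := (h.re_apply_le_norm _).trans (norm_sub_softThreshold_le hτ (star_mul_self_nonneg y))
  rw [map_sub, Complex.sub_re] at hsub
  linarith [h.norm_sq_le y]

theorem exists_smul_norm_eq_one {ψ : A →L[ℂ] ℂ} {b : A} (hb : 0 ≤ b) (hb1 : ‖b‖ ≤ 1)
    (hc : 0 ≤ c) (hcb : c < (ψ b).re) :
    ∃ t : ℝ, 0 ≤ t • b ∧ ‖t • b‖ = 1 ∧ c < (ψ (t • b)).re := by
  have hb0 : 0 < ‖b‖ := norm_pos_iff.2 fun h => by simp [h] at hcb; linarith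
  refine ⟨‖b‖⁻¹, smul_nonneg (by positivity) hb, by simp [norm_smul, hb0.ne'], ?_⟩
  rw [← Complex.coe_smul, map_smul, smul_eq_mul, Complex.re_ofReal_mul]
  exact hcb.trans_le (le_mul_of_one_le_left (hc.trans hcb.le) ((one_le_inv₀ hb0).2 hb1))

theorem IsSquareMajorant.exists_smul_softThreshold {φ ψ : A →L[ℂ] ℂ} (h : IsSquareMajorant ψ φ)
    {τ : ℝ} (hτ : 0 ≤ τ) (hc : 0 ≤ c) {y : A} (hy : ‖y‖ ≤ 1) (hcy : c < ‖φ y‖ ^ 2 - τ) :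
    ∃ t : ℝ, 0 ≤ t • softThreshold τ (star y * y) ∧ ‖t • softThreshold τ (star y * y)‖ = 1 ∧
      c < (ψ (t • softThreshold τ (star y * y))).re := by
  have hle : ‖softThreshold τ (star y * y)‖ ≤ ‖star y * y‖ :=
    CStarAlgebra.norm_le_norm_of_nonneg_of_le (softThreshold_nonneg _ _)
      (softThreshold_le hτ (star_mul_self_nonneg y))
  refine exists_smul_norm_eq_one (softThreshold_nonneg _ _) (hle.trans ?_) hc
    (hcy.trans_le (h.norm_sq_sub_le hτ y))
  rw [CStarRing.norm_star_mul_self]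
  exact mul_le_one₀ hy (norm_nonneg y) hy

theorem IsSquareMajorant.re_ramp_mul_self_le {φ ψ : A →L[ℂ] ℂ} (h : IsSquareMajorant ψ φ)
    {τ : ℝ} (hτ : 0 ≤ τ) {a : A} (ha : 0 ≤ a) :
    (ψ (ramp τ a * ramp τ a)).re ≤ τ⁻¹ * (ψ a).re := by
  refine (h.re_mono (ramp_mul_self_le hτ ha)).trans_eq ?_
  rw [← Complex.coe_smul, map_smul, smul_eq_mul, Complex.re_ofReal_mul]

theorem AlmostFixes.eventually_exists_next {U : Ultrafilter ι} (hE : AlmostFixes E U φ κ)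
    (hU : (U : Filter ι) ≤ cofinite) (hφ : HasSignLowerBound r φ)
    (hψ : ∀ i, IsSquareMajorant (ψ i) (φ i)) {ω : A →ₚ[ℂ] ℂ}
    (hω : ∀ x, Tendsto (fun i => ψ i x) U (𝓝 (ω x))) (hρ : 0 ≤ ρ) (hκ : κ < r - ρ) (hc : 0 ≤ c)
    (hcρ : c < ρ ^ 2) :
    ∀ᶠ i in U, ∃ a, (0 ≤ a ∧ ‖a‖ = 1 ∧ c < (ψ i a).re) ∧
      ∃ E', (∃ κ' < r - ρ, AlmostFixes E' U φ κ') ∧ a ∈ rangeAnnihilator E' ∧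
        ∀ d ∈ rangeAnnihilator E, a * d = 0 ∧ d ∈ rangeAnnihilator E' := by
  obtain ⟨κ', hκκ', hκ'⟩ := exists_between hκ
  have hgap : 0 < κ' - κ := sub_pos.2 hκκ'
  set τ := ρ ^ 2 - c
  have hτ : 0 < τ := sub_pos.2 hcρ
  filter_upwards [hE.eventually_exists_re_lt hU hφ (fun i => (hψ i).norm_le_one) ω hρ
    (by linarith) (show 0 < τ * (κ' - κ) ^ 2 by positivity)] with i ⟨x, hx, hxω, hxφ⟩
  set a := star (E x) * E x
  have ha : 0 ≤ a := star_mul_self_nonneg _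
  obtain ⟨t, ht⟩ : ∃ t : ℝ, 0 ≤ t • softThreshold τ a ∧ ‖t • softThreshold τ a‖ = 1 ∧
      c < (ψ i (t • softThreshold τ a)).re :=
    (hψ i).exists_smul_softThreshold hτ.le hc hx
      ((sub_lt_sub_right (by gcongr : ρ ^ 2 < ‖φ i (E x)‖ ^ 2) τ).trans_eq' (by ring))
  have hramp : ∀ᶠ j in U, (ψ j (ramp τ a * ramp τ a)).re ≤ (κ' - κ) ^ 2 := by
    filter_upwards [((Complex.continuous_re.tendsto _).comp (hω a)).eventually_lt_const hxω]
      with j hj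
    exact ((hψ j).re_ramp_mul_self_le hτ.le ha).trans ((inv_mul_le_iff₀ hτ).2 hj.le)
  have hfix := (almostFixes_mulRightOneSub hψ (ramp_nonneg hτ.le ha) (norm_ramp_le_one hτ.le ha)
    hgap.le hramp).comp hE
  rw [add_sub_cancel] at hfix
  refine ⟨t • softThreshold τ a, ht, mulRightOneSub (ramp τ a) ∘L E, ⟨κ', hκ', hfix⟩, ?_,
    fun d hd => ?_⟩
  · exact mem_rangeAnnihilator_mulRightOneSub_comp.2 fun x => by
      rw [mul_smul_comm t (ramp τ a), ramp_mul_softThreshold hτ]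
  · have had : a * d = 0 := by rw [mul_assoc, hd, mul_zero]
    refine ⟨by rw [smul_mul_assoc, softThreshold_mul_eq_zero hτ.le ha had, smul_zero], ?_⟩
    rw [mem_rangeAnnihilator_mulRightOneSub_comp, ramp_mul_eq_zero hτ.le ha had]
    simpa [rangeAnnihilator] using hd

theorem exists_orthogonal_norming_subsequence {φ ψ : ℕ → A →L[ℂ] ℂ}
    (hψ : ∀ m, IsSquareMajorant (ψ m) (φ m)) (hφ : HasSignLowerBound r φ) (hr : 0 < r)
    (hc : c < r ^ 2) :
    ∃ m : ℕ → ℕ, StrictMono m ∧ ∃ a : ℕ → A, (∀ n, 0 ≤ a n ∧ ‖a n‖ = 1) ∧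
      (∀ i j, i ≠ j → a i * a j = 0) ∧ ∀ n, c < (ψ (m n) (a n)).re := by
  obtain ⟨ρ, hcρ, hρr⟩ := exists_between ((Real.sqrt_lt' hr).2 (max_lt hc (by positivity)))
  have hρ : 0 ≤ ρ := (Real.sqrt_nonneg _).trans hcρ.le
  obtain ⟨ω, hω⟩ := exists_positiveLinearMap_tendsto (fun m => (hψ m).norm_majorant_le_one)
    (fun m => (hψ m).map_nonneg) (hyperfilter ℕ)
  let S := {E : A →L[ℂ] A // ∃ κ < r - ρ, AlmostFixes E (hyperfilter ℕ : Filter ℕ) φ κ}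
  have : Nonempty S := ⟨_, 0, sub_pos.2 hρr, .id _ φ⟩
  obtain ⟨m, hm, a, ha, horth⟩ := exists_strictMono_forall_lt
    (fun E : S => rangeAnnihilator E.1) (P := fun m a => 0 ≤ a ∧ ‖a‖ = 1 ∧ max c 0 < (ψ m a).re)
    (R := fun d a => a * d = 0) fun ⟨E, κ, hκ, hE⟩ k => by
      have hnext := hE.eventually_exists_next hyperfilter_le_cofinite hφ hψ hω hρ hκ
        (le_max_right c 0) (Real.lt_sq_of_sqrt_lt hcρ)
      obtain ⟨m, ⟨a, ha, E', hE', hD⟩, hkm⟩ :=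
        (hnext.and (Nat.hyperfilter_le_atTop (eventually_gt_atTop k))).exists
      exact ⟨m, hkm, a, ha, ⟨E', hE'⟩, hD⟩
  refine ⟨m, hm, a, fun n => ⟨(ha n).1, (ha n).2.1⟩, fun i j hij => ?_,
    fun n => (le_max_left c 0).trans_lt (ha n).2.2⟩
  rcases lt_or_gt_of_ne hij with h | h
  · simpa [(ha i).1.star_eq, (ha j).1.star_eq] using congrArg star (horth i j h)
  · exact horth j i h

end Selection

section AbsoluteValues

theorem norm_apply_star_mul_sq_le {B : Type*} [NonUnitalCStarAlgebra B] [PartialOrder B]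
    [StarOrderedRing B] (f : B →ₚ[ℂ] ℂ) (x y : B) :
    ‖f (star x * y)‖ ^ 2 ≤ (f (star x * x)).re * (f (star y * y)).re := by
  have h : ‖f (star x * y)‖ ≤ ‖f.toPreGNS x‖ * ‖f.toPreGNS y‖ :=
    norm_inner_le_norm (𝕜 := ℂ) (f.toPreGNS x) (f.toPreGNS y)
  rw [← norm_toPreGNS_sq, ← norm_toPreGNS_sq, ← mul_pow]
  gcongr

variable {A : Type*} [NonUnitalCStarAlgebra A]

namespace PolarWitness

variable {ψ absψ : A →L[ℂ] ℂ}

instance (W : PolarWitness A ψ absψ) : CStarAlgebra W.B :=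
  { W.instRing, W.instStarRing, W.instCStar, W.instAlg, W.instStarMod, W.instComplete with }

open CStarAlgebra in
theorem norm_absΦ_mul_sq_le (W : PolarWitness A ψ absψ) (b c : W.B) :
    ‖W.absΦ (b * c)‖ ^ 2 ≤ (W.absΦ (b * star b)).re * (W.absΦ (star c * c)).re := by
  let _ : PartialOrder W.B := spectralOrder W.B
  have _ : StarOrderedRing W.B := spectralOrderedRing W.B
  let f : W.B →ₚ[ℂ] ℂ := .mk₀ (W.absΦ : W.B →ₗ[ℂ] ℂ) fun b hb => by
    obtain ⟨s, rfl⟩ := nonneg_iff_eq_star_mul_self.1 hb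
    exact W.habsΦpos s
  have h := norm_apply_star_mul_sq_le f (star b) c
  rw [star_star] at h
  exact h

theorem absψ_star_mul_self_nonneg (W : PolarWitness A ψ absψ) (x : A) :
    0 ≤ absψ (star x * x) := by
  rw [← W.habsψ, W.ι_mul, W.ι_star]
  exact W.habsΦpos _

theorem norm_absψ_le (W : PolarWitness A ψ absψ) : ‖absψ‖ ≤ ‖ψ‖ :=
  absψ.opNorm_le_bound (norm_nonneg ψ) fun x => by
    rw [← W.habsψ, ← W.ι_isometry, ← W.habsΦnorm]
    exact W.absΦ.le_opNorm _

theorem norm_sq_le (W : PolarWitness A ψ absψ) (x : A) :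
    ‖ψ x‖ ^ 2 ≤ (absψ (x * star x)).re * ‖ψ‖ := by
  have hu : (W.absΦ (star W.u * W.u)).re ≤ ‖ψ‖ := by
    refine (Complex.re_le_norm _).trans ((W.absΦ.le_opNorm _).trans ?_)
    rw [W.habsΦnorm, CStarRing.norm_star_mul_self]
    exact mul_le_of_le_one_right (norm_nonneg ψ) (mul_le_one₀ W.hu1 (norm_nonneg _) W.hu1)
  have hpos : 0 ≤ (absψ (x * star x)).re := by
    simpa using (Complex.nonneg_iff.1 (W.absψ_star_mul_self_nonneg (star x))).1
  calc ‖ψ x‖ ^ 2 = ‖W.absΦ (W.ι x * W.u)‖ ^ 2 := by rw [← W.hpolar, W.hΦ]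
    _ ≤ (W.absΦ (W.ι x * star (W.ι x))).re * (W.absΦ (star W.u * W.u)).re :=
        W.norm_absΦ_mul_sq_le _ _
    _ = (absψ (x * star x)).re * (W.absΦ (star W.u * W.u)).re := by
        rw [← W.ι_star, ← W.ι_mul, W.habsψ]
    _ ≤ (absψ (x * star x)).re * ‖ψ‖ := by gcongr

end PolarWitness

theorem IsAbsValue.isSquareMajorant [PartialOrder A] [StarOrderedRing A] {ψ ψstar absψ : A →L[ℂ] ℂ}
    (h : IsAbsValue ψ absψ) (hψ : ‖ψ‖ ≤ 1)
    (hstar : ∀ x, ψstar x = starRingEnd ℂ (ψ (star x))) : IsSquareMajorant absψ ψstar := by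
  obtain ⟨W⟩ := h
  refine ⟨fun a ha => ?_, W.norm_absψ_le.trans hψ, fun x => ?_⟩
  · obtain ⟨s, rfl⟩ := CStarAlgebra.nonneg_iff_eq_star_mul_self.1 ha
    exact W.absψ_star_mul_self_nonneg s
  · have hle := W.norm_sq_le (star x)
    rw [star_star] at hle
    have hpos := (Complex.nonneg_iff.1 (W.absψ_star_mul_self_nonneg x)).1
    rw [hstar, RCLike.norm_conj]
    exact hle.trans (mul_le_of_le_one_right hpos hψ)

theorem norm_le_norm_of_apply_eq_conj {f g : A →L[ℂ] ℂ}
    (h : ∀ x, g x = starRingEnd ℂ (f (star x))) : ‖g‖ ≤ ‖f‖ :=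
  g.opNorm_le_bound (norm_nonneg f) fun x => by
    rw [h, RCLike.norm_conj, ← norm_star x]
    exact f.le_opNorm _

theorem apply_eq_conj_comm {f g : A →L[ℂ] ℂ} (h : ∀ x, g x = starRingEnd ℂ (f (star x))) (x : A) :
    f x = starRingEnd ℂ (g (star x)) := by
  rw [h, star_star, Complex.conj_conj]

theorem HasSignLowerBound.of_apply_eq_conj {ι : Type*} {r : ℝ} {φ φstar : ι → A →L[ℂ] ℂ}
    (hφ : HasSignLowerBound r φ) (h : ∀ i x, φstar i x = starRingEnd ℂ (φ i (star x))) :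
    HasSignLowerBound r φstar := fun s σ =>
  (hφ s σ).trans <| norm_le_norm_of_apply_eq_conj fun x => by
    simp [Units.smul_def, h]

end AbsoluteValues

theorem l1_isomorphic_gives_orthogonal_norming_elements_general
    {A : Type*} [NonUnitalCStarAlgebra A] [PartialOrder A] [StarOrderedRing A]
    (r : ℝ) (hr : 0 < r)
    (φ φstar absφ absφstar : ℕ → (A →L[ℂ] ℂ))
    (hφnorm : ∀ m, ‖φ m‖ ≤ 1)
    (hφstar : ∀ m x, φstar m x = starRingEnd ℂ (φ m (star x)))
    (habs : ∀ m, IsAbsValue (φ m) (absφ m))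
    (habsstar : ∀ m, IsAbsValue (φstar m) (absφstar m))
    (hφ : HasSignLowerBound r φ) (ε : ℝ) (hε : 0 < ε) :
    ∃ mn : ℕ → ℕ, StrictMono mn ∧ ∃ a b : ℕ → A,
      (∀ n, 0 ≤ a n ∧ ‖a n‖ = 1) ∧ (∀ n, 0 ≤ b n ∧ ‖b n‖ = 1) ∧
      (∀ i j, i ≠ j → a i * a j = 0) ∧ (∀ i j, i ≠ j → b i * b j = 0) ∧
      ∀ n, (1 - ε) * r ^ 2 < (absφ (mn n) (a n)).re ∧
        (1 - ε) * r ^ 2 < (absφstar (mn n) (b n)).re := by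
  have hc : (1 - ε) * r ^ 2 < r ^ 2 := mul_lt_of_lt_one_left (by positivity) (by linarith)
  have hmajor (m : ℕ) : IsSquareMajorant (absφ m) (φstar m) :=
    (habs m).isSquareMajorant (hφnorm m) (hφstar m)
  have hmajor_star (m : ℕ) : IsSquareMajorant (absφstar m) (φ m) :=
    (habsstar m).isSquareMajorant (hmajor m).norm_le_one (apply_eq_conj_comm (hφstar m))
  obtain ⟨k, hk, a, ha, ha_orth, haφ⟩ :=
    exists_orthogonal_norming_subsequence hmajor (hφ.of_apply_eq_conj hφstar) hr hc
  obtain ⟨l, hl, b, hb, hb_orth, hbφ⟩ :=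
    exists_orthogonal_norming_subsequence (fun n => hmajor_star (k n))
      (hφ.comp_injective hk.injective) hr hc
  exact ⟨k ∘ l, hk.comp hl, a ∘ l, b, fun n => ha (l n), hb,
    fun i j hij => ha_orth _ _ (hl.injective.ne hij), hb_orth, fun n => ⟨haφ (l n), hbφ n⟩⟩

/-- Let `(φ m)` be a normalized sequence in the dual of a C*-algebra `A`
spanning `ℓ¹` `r`-isomorphically.  Then for every `ε > 0` there are a
subsequence `(φ (mn n))`, pairwise orthogonal positive normalized `(a n)` and
pairwise orthogonal positive normalized `(b n)` in `A`, with
`|φ (mn n)| (a n) > (1-ε) r²` and `|φ* (mn n)| (b n) > (1-ε) r²` for all `n`. -/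
theorem l1_isomorphic_gives_orthogonal_norming_elements
    {A : Type*} [NonUnitalCStarAlgebra A] [PartialOrder A] [StarOrderedRing A]
    (r : ℝ) (hr : 0 < r)
    (φ φstar absφ absφstar : ℕ → (A →L[ℂ] ℂ))
    (hφnorm : ∀ m, ‖φ m‖ = 1)
    (hφstar : ∀ m x, φstar m x = starRingEnd ℂ (φ m (star x)))
    (habs : ∀ m, IsAbsValue (φ m) (absφ m))
    (habsstar : ∀ m, IsAbsValue (φstar m) (absφstar m))
    (hl1 : ∀ α : ℕ → ℂ, Summable (fun m => ‖α m‖) →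
      r * ∑' m, ‖α m‖ ≤ ‖∑' m, α m • φ m‖ ∧ ‖∑' m, α m • φ m‖ ≤ ∑' m, ‖α m‖)
    (ε : ℝ) (hε : 0 < ε) :
    ∃ mn : ℕ → ℕ, StrictMono mn ∧ ∃ a b : ℕ → A,
      (∀ n, 0 ≤ a n ∧ ‖a n‖ = 1) ∧ (∀ n, 0 ≤ b n ∧ ‖b n‖ = 1) ∧
      (∀ i j, i ≠ j → a i * a j = 0) ∧ (∀ i j, i ≠ j → b i * b j = 0) ∧
      ∀ n, (1 - ε) * r ^ 2 < (absφ (mn n) (a n)).re ∧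
        (1 - ε) * r ^ 2 < (absφstar (mn n) (b n)).re :=
  l1_isomorphic_gives_orthogonal_norming_elements_general r hr φ φstar absφ absφstar
    (fun m => (hφnorm m).le) hφstar habs habsstar (.of_tsum fun α hα => (hl1 α hα).1) ε hε
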